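/- Let v_0 be continuous and bounded on ℝ. Suppose c is continuous and bounded below on [0,∞)×ℝ, has an x-derivative c_x at each point of (0,∞)×ℝ, and c_x extends to a continuous bounded function on [0,∞)×ℝ. Then for every t > 0 and x ∈ ℝ, the sequence v_n^{(t)}(t,x) converges as n → ∞ to v(t,x) := ∫_{C_W} v_0(√(2t) w(1) + x) · exp(−t ∫₀¹ (x + √(2t) w(s))² ds) · exp(−t ∫₀¹ c(t(1−s), √(2t) w(s) + x) ds) dm_W(w). -/

import Mathlib

/-!
The Mehler kernel `U_h(y, z)` equals
`(2π sinh 2h)^(-1/2) exp (-(y - z)² / (2 sinh 2h)) exp (-tanh h (y² + z²) / 2)`,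
because `(cosh 2h - 1) / sinh 2h = tanh h`. Hence one step of the splitting scheme with `h = t / n`
is a Gaussian transition of variance `sinh 2h` weighted by bounded factors. After the substitution
`y = x + σₙ u` with `σₙ² = n sinh (2t/n)` the Gaussian transition is that of Brownian motion over
a time step `1 / n`, so the `n`-th approximation is *exactly* the Wiener integral

`∫ v₀ (Xₙ) exp (-(tanh h / 2) ∑ (Xᵢ² + Xᵢ₊₁²)) exp (-h ∑ c (t (1 - i/n), Xᵢ)) dm_W(w)`,
with `Xᵢ = x + σₙ w(i/n)` and `0 ≤ i < n` in the sums (`atNode_eq_integral`). No Feynman–Kac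
formula is needed for this, only Fubini (`iterate_eq_integral_chain`) and the finite-dimensional
distributions of the Wiener measure (`normalDensity_eq_chain`).

As `n → ∞`, `n tanh (t/n) → t` and `σₙ → √(2t)`, and the sums are Riemann sums, so the integrand
converges for every path (`tendsto_chain_path`). It is bounded by `exp (-t m) sup |v₀|` when
`m ≤ c`, and dominated convergence concludes (`tendsto_atNode_wienerFK`).
-/

open MeasureTheory Real Filter Topology

noncomputable section


/-- The classical Wiener space: continuous functions on `[0,1]` vanishing at `0`. -/
def CW : Type := {w : C(Set.Icc (0:ℝ) 1, ℝ) // w ⟨0, by norm_num⟩ = 0}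

instance : TopologicalSpace CW := by unfold CW; infer_instance
instance : MeasurableSpace CW := borel CW

/-- Evaluation of an element of the Wiener space at a time `s` (clamped to `[0,1]`). -/
def CW.eval (w : CW) (s : ℝ) : ℝ := w.1 (Set.projIcc (0:ℝ) 1 zero_le_one s)

/-- The value preceding index `i`, with the convention that it is `0` for `i = 0`. -/
def prevVal {n : ℕ} (v : Fin n → ℝ) (i : Fin n) : ℝ :=
  if h : (i : ℕ) = 0 then 0 else v ⟨(i : ℕ) - 1, by have := i.isLt; omega⟩

/-- The normal (Gaussian) density of the finite-dimensional distributions of Brownian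
motion at times `t 0 < t 1 < ⋯ < t (n-1)`. -/
def normalDensity {n : ℕ} (t : Fin n → ℝ) (ξ : Fin n → ℝ) : ℝ :=
  (Real.sqrt ((2 * π) ^ n * ∏ i, (t i - prevVal t i)))⁻¹ *
    Real.exp (-(1 / 2) * ∑ i, (ξ i - prevVal ξ i) ^ 2 / (t i - prevVal t i))

/-- `μ` is the Wiener measure: a probability measure on `CW` whose finite-dimensional
distributions at times `0 < t 0 < t 1 < ⋯ < t (n-1) ≤ 1` have the normal density. -/
structure IsWienerMeasure (μ : Measure CW) : Prop where
  prob : IsProbabilityMeasure μ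
  fdd : ∀ (n : ℕ) (t : Fin n → ℝ), StrictMono t → (∀ i, 0 < t i) → (∀ i, t i ≤ 1) →
    Measure.map (fun (w : CW) (i : Fin n) => w.eval (t i)) μ =
      MeasureTheory.volume.withDensity (fun ξ => ENNReal.ofReal (normalDensity t ξ))

/-- The Feynman–Kac type integral of the paper:
`S(v₀,c)(t,x) = ∫_{C_W} v₀(√(2t) w(1)+x) exp(−t∫₀¹ (x+√(2t)w(s))² ds)
  exp(−t∫₀¹ c(t(1−s), √(2t)w(s)+x) ds) dm_W(w)`. -/
def wienerFK (μ : Measure CW) (v₀ : ℝ → ℝ) (c : ℝ → ℝ → ℝ) (t x : ℝ) : ℝ :=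
  ∫ w : CW,
    v₀ (Real.sqrt (2 * t) * w.eval 1 + x) *
      Real.exp (-(t * ∫ s in (0:ℝ)..1, (x + Real.sqrt (2 * t) * w.eval s) ^ 2)) *
      Real.exp (-(t * ∫ s in (0:ℝ)..1,
        c (t * (1 - s)) (Real.sqrt (2 * t) * w.eval s + x))) ∂μ


/-- The Mehler semigroup of the harmonic oscillator. -/
def mehler (s : ℝ) (g : ℝ → ℝ) (x : ℝ) : ℝ :=
  ∫ z : ℝ, (Real.sqrt (2 * π * Real.sinh (2 * s)))⁻¹ *
    Real.exp (-(1 / 2) * ((x ^ 2 + z ^ 2) * Real.cosh (2 * s) / Real.sinh (2 * s)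
      - 2 * x * z / Real.sinh (2 * s))) * g z

/-- The values of the approximating sequence `v_n^{(t)}` at the subdivision nodes
`τ_k = k t / (2n)`:  an even step applies the Mehler semigroup `U_{t/n}` and an odd
step multiplies by `exp(−(t/n) c(τ_{k+1}, x))`. -/
def atNode (v₀ : ℝ → ℝ) (c : ℝ → ℝ → ℝ) (t : ℝ) (n : ℕ) : ℕ → ℝ → ℝ
  | 0 => v₀
  | k + 1 =>
      if k % 2 = 0 then mehler (t / n) (atNode v₀ c t n k)
      else fun x =>
        Real.exp (-(t / n) * c ((k + 1) * t / (2 * n)) x) * atNode v₀ c t n k x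

/-- The approximating function `v_n^{(t)}` of the paper: on the even interval
`[τ_{2k}, τ_{2k+1}]` it solves the (doubled) harmonic-oscillator heat equation, i.e.
`v_n^{(t)}(τ,·) = U_{2(τ−τ_{2k})} v_n^{(t)}(τ_{2k},·)`, and on the odd interval
`[τ_{2k+1}, τ_{2k+2}]` it is `exp(−2c(τ_{2k+2},x)(τ−τ_{2k+1})) v_n^{(t)}(τ_{2k+1},x)`. -/
def vApprox (v₀ : ℝ → ℝ) (c : ℝ → ℝ → ℝ) (t : ℝ) (n : ℕ) (τ x : ℝ) : ℝ :=
  let k : ℕ := min ⌊2 * n * τ / t⌋₊ (2 * n - 1)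
  let τk : ℝ := k * t / (2 * n)
  if k % 2 = 0 then
    if τ = τk then atNode v₀ c t n k x else mehler (2 * (τ - τk)) (atNode v₀ c t n k) x
  else
    Real.exp (-2 * c ((k + 1) * t / (2 * n)) x * (τ - τk)) * atNode v₀ c t n k x

/-! ### Integrals over discrete paths -/

/-- The weight of a discrete path that starts at `u` and visits `ξ 0, …, ξ (k - 1)`: the product of
one factor `q j` per step, times a terminal factor `f` at the end point. The index `j` of the
factor counts the steps still to go, so that `q k` belongs to the step from `u` to `ξ 0`. -/
def chain (q : ℕ → ℝ → ℝ → ℝ) (f : ℝ → ℝ) : (k : ℕ) → ℝ → (Fin k → ℝ) → ℝ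
  | 0, u, _ => f u
  | k + 1, u, ξ => q (k + 1) u (ξ 0) * chain q f k (ξ 0) (Fin.tail ξ)

lemma measurable_chain {q : ℕ → ℝ → ℝ → ℝ} {f : ℝ → ℝ}
    (hq : ∀ k, Measurable fun p : ℝ × ℝ => q k p.1 p.2) (hf : Measurable f) (k : ℕ) :
    Measurable fun p : ℝ × (Fin k → ℝ) => chain q f k p.1 p.2 := by
  induction k with
  | zero => exact hf.comp measurable_fst
  | succ k ih =>
    have h0 : Measurable fun p : ℝ × (Fin (k + 1) → ℝ) => p.2 0 :=
      (measurable_pi_apply 0).comp measurable_snd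
    have ht : Measurable fun p : ℝ × (Fin (k + 1) → ℝ) => Fin.tail p.2 :=
      measurable_pi_lambda _ fun i => (measurable_pi_apply i.succ).comp measurable_snd
    exact ((hq (k + 1)).comp (measurable_fst.prodMk h0)).mul (ih.comp (h0.prodMk ht))

lemma measurable_chain_right {q : ℕ → ℝ → ℝ → ℝ} {f : ℝ → ℝ}
    (hq : ∀ k, Measurable fun p : ℝ × ℝ => q k p.1 p.2) (hf : Measurable f) (k : ℕ) (u : ℝ) :
    Measurable (chain q f k u) :=
  (measurable_chain hq hf k).comp (measurable_const.prodMk measurable_id)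

lemma chain_nonneg {q : ℕ → ℝ → ℝ → ℝ} {f : ℝ → ℝ} (hq : ∀ k u z, 0 ≤ q k u z)
    (hf : ∀ u, 0 ≤ f u) (k : ℕ) (u : ℝ) (ξ : Fin k → ℝ) : 0 ≤ chain q f k u ξ := by
  induction k generalizing u with
  | zero => exact hf u
  | succ k ih => exact mul_nonneg (hq _ _ _) (ih _ _)

lemma abs_chain_le {q : ℕ → ℝ → ℝ → ℝ} {f : ℝ → ℝ} {B M : ℝ} (hq : ∀ k u z, |q k u z| ≤ B)
    (hf : ∀ u, |f u| ≤ M) (k : ℕ) (u : ℝ) (ξ : Fin k → ℝ) :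
    |chain q f k u ξ| ≤ B ^ k * M := by
  induction k generalizing u with
  | zero => simpa [chain] using hf u
  | succ k ih =>
    have hB : 0 ≤ B := (abs_nonneg _).trans (hq 0 0 0)
    rw [chain, abs_mul, pow_succ', mul_assoc]
    exact mul_le_mul (hq _ _ _) (ih _ _) (abs_nonneg _) hB

/-- Along a sequence `a`, the recursive path weight is the product of the one-step factors. -/
lemma chain_path (q : ℕ → ℝ → ℝ → ℝ) (f : ℝ → ℝ) (k : ℕ) (a : ℕ → ℝ) :
    chain q f k (a 0) (fun i : Fin k => a (i + 1)) =
      (∏ i ∈ Finset.range k, q (k - i) (a i) (a (i + 1))) * f (a k) := by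
  induction k generalizing a with
  | zero => simp [chain]
  | succ k ih =>
    have := ih (fun i => a (i + 1))
    rw [chain, Finset.prod_range_succ']
    simp only [Nat.add_sub_add_right, Nat.sub_zero, Fin.val_zero, zero_add] at this ⊢
    have ht : (Fin.tail fun i : Fin (k + 1) => a (i + 1)) = fun i : Fin k => a (i + 1 + 1) := by
      ext i; simp [Fin.tail]
    rw [ht, this]
    ring

/-- Splitting off the first coordinate of a vector preserves Lebesgue measure. -/
lemma measurePreserving_cons (k : ℕ) :
    MeasurePreserving (MeasurableEquiv.piFinSuccAbove (fun _ : Fin (k + 1) => ℝ) 0)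
      volume (volume.prod volume) :=
  volume_preserving_piFinSuccAbove (fun _ : Fin (k + 1) => ℝ) 0

lemma piFinSuccAbove_zero_apply (k : ℕ) (ξ : Fin (k + 1) → ℝ) :
    MeasurableEquiv.piFinSuccAbove (fun _ : Fin (k + 1) => ℝ) 0 ξ = (ξ 0, Fin.tail ξ) := by
  ext <;> simp [MeasurableEquiv.piFinSuccAbove, Fin.insertNthEquiv, Fin.tail]

/-- A product of transition densities is a probability density on path space. -/
lemma lintegral_chain_density {ρ : ℝ → ℝ → ℝ} (hρm : Measurable fun p : ℝ × ℝ => ρ p.1 p.2)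
    (hρ0 : ∀ u z, 0 ≤ ρ u z) (hρ1 : ∀ u, ∫⁻ z, ENNReal.ofReal (ρ u z) = 1) (k : ℕ) (u : ℝ) :
    ∫⁻ ξ : Fin k → ℝ, ENNReal.ofReal (chain (fun _ => ρ) 1 k u ξ) = 1 := by
  induction k generalizing u with
  | zero => simp [chain, MeasureTheory.volume_pi]
  | succ k ih =>
    have hm := measurable_chain (q := fun _ => ρ) (f := 1) (fun _ => hρm) measurable_one k
    let G : ℝ × (Fin k → ℝ) → ENNReal := fun p =>
      ENNReal.ofReal (ρ u p.1 * chain (fun _ => ρ) 1 k p.1 p.2)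
    have hG : Measurable G :=
      ((hρm.comp (measurable_const.prodMk measurable_fst)).mul hm).ennreal_ofReal
    have h1 := (measurePreserving_cons k).lintegral_comp hG
    simp only [piFinSuccAbove_zero_apply] at h1
    refine h1.trans ?_
    rw [lintegral_prod _ hG.aemeasurable, ← hρ1 u]
    refine lintegral_congr fun z => ?_
    simp only [G]
    simp_rw [ENNReal.ofReal_mul (hρ0 u z)]
    rw [lintegral_const_mul _
      (measurable_chain_right (fun _ => hρm) measurable_one k z).ennreal_ofReal, ih z, mul_one]

lemma integrable_chain_mul {ρ : ℝ → ℝ → ℝ} (hρm : Measurable fun p : ℝ × ℝ => ρ p.1 p.2)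
    (hρ0 : ∀ u z, 0 ≤ ρ u z) (hρ1 : ∀ u, ∫⁻ z, ENNReal.ofReal (ρ u z) = 1)
    {W : ℕ → ℝ → ℝ → ℝ} {f : ℝ → ℝ} {B M : ℝ}
    (hWm : ∀ k, Measurable fun p : ℝ × ℝ => W k p.1 p.2) (hW : ∀ k u z, |W k u z| ≤ B)
    (hfm : Measurable f) (hf : ∀ u, |f u| ≤ M) (k : ℕ) (u : ℝ) :
    Integrable fun ξ : Fin k → ℝ => chain (fun _ => ρ) 1 k u ξ * chain W f k u ξ := by
  have hD : Integrable (chain (fun _ => ρ) 1 k u) := by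
    refine ⟨(measurable_chain_right (fun _ => hρm) measurable_one k u).aestronglyMeasurable, ?_⟩
    rw [hasFiniteIntegral_iff_ofReal (Eventually.of_forall
      (chain_nonneg (f := 1) (fun _ => hρ0) (fun _ => zero_le_one) k u)),
      lintegral_chain_density hρm hρ0 hρ1]
    exact ENNReal.one_lt_top
  exact hD.mul_bdd (measurable_chain_right hWm hfm k u).aestronglyMeasurable
    (Eventually.of_forall fun ξ => abs_chain_le hW hf k u ξ)

/-- Iterating one-step integral operators amounts to integrating over the space of discrete
paths (Fubini). -/
lemma iterate_eq_integral_chain {ρ : ℝ → ℝ → ℝ} (hρm : Measurable fun p : ℝ × ℝ => ρ p.1 p.2)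
    (hρ0 : ∀ u z, 0 ≤ ρ u z) (hρ1 : ∀ u, ∫⁻ z, ENNReal.ofReal (ρ u z) = 1)
    {W : ℕ → ℝ → ℝ → ℝ} {f : ℝ → ℝ} {B M : ℝ}
    (hWm : ∀ k, Measurable fun p : ℝ × ℝ => W k p.1 p.2) (hW : ∀ k u z, |W k u z| ≤ B)
    (hfm : Measurable f) (hf : ∀ u, |f u| ≤ M)
    {J : ℕ → ℝ → ℝ} (hJ0 : J 0 = f)
    (hJ : ∀ k u, J (k + 1) u = ∫ z, ρ u z * W (k + 1) u z * J k z) (k : ℕ) (u : ℝ) :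
    J k u = ∫ ξ : Fin k → ℝ, chain (fun _ => ρ) 1 k u ξ * chain W f k u ξ := by
  induction k generalizing u with
  | zero => simp [chain, hJ0, MeasureTheory.volume_pi, measureReal_def]
  | succ k ih =>
    let G : ℝ × (Fin k → ℝ) → ℝ := fun p =>
      (ρ u p.1 * chain (fun _ => ρ) 1 k p.1 p.2) * (W (k + 1) u p.1 * chain W f k p.1 p.2)
    have hint := integrable_chain_mul hρm hρ0 hρ1 hWm hW hfm hf (k + 1) u
    have hGe : (fun ξ : Fin (k + 1) → ℝ =>
        chain (fun _ => ρ) 1 (k + 1) u ξ * chain W f (k + 1) u ξ) =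
        G ∘ MeasurableEquiv.piFinSuccAbove (fun _ : Fin (k + 1) => ℝ) 0 := by
      ext ξ
      simp only [Function.comp_apply, piFinSuccAbove_zero_apply, G, chain]
    rw [hGe] at hint ⊢
    have hGi : Integrable G (volume.prod volume) :=
      ((measurePreserving_cons k).integrable_comp_emb
        (MeasurableEquiv.measurableEmbedding _)).1 hint
    have h1 := (measurePreserving_cons k).integral_comp' G
    refine Eq.trans ?_ h1.symm
    rw [integral_prod _ hGi, hJ]
    refine integral_congr_ae (Eventually.of_forall fun z => ?_)
    simp only [G]
    rw [ih z, ← integral_const_mul]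
    refine integral_congr_ae (Eventually.of_forall fun η => ?_)
    simp only
    ring

/-! ### The splitting scheme in Brownian coordinates -/

/-- The Brownian transition density over a time step of length `1 / n`. -/
def stepDensity (n : ℕ) (u z : ℝ) : ℝ :=
  (√(2 * π * (n : ℝ)⁻¹))⁻¹ * Real.exp (-(z - u) ^ 2 / (2 * (n : ℝ)⁻¹))

lemma stepDensity_eq_gaussianPDFReal (n : ℕ) (u : ℝ) :
    stepDensity n u = ProbabilityTheory.gaussianPDFReal u (n : NNReal)⁻¹ := by
  ext z
  simp [stepDensity, ProbabilityTheory.gaussianPDFReal]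

lemma measurable_stepDensity (n : ℕ) :
    Measurable fun p : ℝ × ℝ => stepDensity n p.1 p.2 := by
  unfold stepDensity
  fun_prop

lemma stepDensity_nonneg (n : ℕ) (u z : ℝ) : 0 ≤ stepDensity n u z := by
  unfold stepDensity; positivity

lemma lintegral_stepDensity {n : ℕ} (hn : 0 < n) (u : ℝ) :
    ∫⁻ z, ENNReal.ofReal (stepDensity n u z) = 1 := by
  rw [stepDensity_eq_gaussianPDFReal]
  exact ProbabilityTheory.lintegral_gaussianPDFReal_eq_one u (by positivity)

/-- The finite-dimensional density of Brownian motion at the times `1/n, 2/n, …, 1` is the product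
of the one-step transition densities along the path started at `0`. -/
lemma normalDensity_eq_chain {n : ℕ} (hn : 0 < n) (ξ : Fin n → ℝ) :
    normalDensity (fun i : Fin n => ((i : ℕ) + 1 : ℝ) / n) ξ =
      chain (fun _ => stepDensity n) 1 n 0 ξ := by
  have hn' : (n : ℝ) ≠ 0 := by positivity
  -- `a` is the path `0, ξ 0, ξ 1, …`, continued by junk zeros beyond index `n`
  let a : ℕ → ℝ := fun j => Nat.casesOn j 0 fun i => if h : i < n then ξ ⟨i, h⟩ else 0
  have ha : ξ = fun i : Fin n => a (i + 1) := by
    ext i; simp [a]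
  have hprev : ∀ i : Fin n, prevVal ξ i = a i := by
    rintro ⟨i, hi⟩
    cases i with
    | zero => simp [prevVal, a]
    | succ i => simp [prevVal, a, (Nat.lt_succ_self i).trans hi]
  have hprevt : ∀ i : Fin n,
      ((i : ℕ) + 1 : ℝ) / n - prevVal (fun i : Fin n => ((i : ℕ) + 1 : ℝ) / n) i = (n : ℝ)⁻¹ := by
    rintro ⟨i, hi⟩
    cases i with
    | zero => simp [prevVal]
    | succ i => simp [prevVal]; field_simp; ring
  have hchain := chain_path (fun _ => stepDensity n) 1 n a
  rw [← ha] at hchain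
  refine Eq.trans ?_ hchain.symm
  have hξ : ∀ i : Fin n, ξ i = a (i + 1) := fun i => congrFun ha i
  unfold normalDensity
  simp only [hprevt, hprev, hξ, Finset.prod_const, Finset.card_univ, Fintype.card_fin]
  rw [← mul_pow, Finset.prod_range]
  simp only [stepDensity, Finset.prod_mul_distrib, Finset.prod_const, Finset.card_univ,
    Fintype.card_fin, ← Real.exp_sum, Pi.one_apply, mul_one]
  have hs : √((2 * π * (n : ℝ)⁻¹) ^ n) = √(2 * π * (n : ℝ)⁻¹) ^ n := by
    rw [Real.sqrt_eq_iff_mul_self_eq (by positivity) (by positivity), ← mul_pow,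
      Real.mul_self_sqrt (by positivity)]
  rw [hs, ← inv_pow, Finset.mul_sum]
  congr 2
  refine Finset.sum_congr rfl fun i _ => ?_
  field_simp

/-- The Mehler kernel is a Gaussian kernel of variance `sinh (2h)` times the trapezoidal weight
`exp (-tanh h * (y² + z²) / 2)`. In the coordinates `y = x + σ u` with `σ² = n sinh (2h)` the
Gaussian factor becomes the Brownian transition density over time `1 / n`. -/
lemma mehler_rescaled {n : ℕ} (hn : 0 < n) {h σ : ℝ} (hh : 0 < h) (hσ : 0 < σ)
    (hσ2 : σ ^ 2 = n * Real.sinh (2 * h)) (g : ℝ → ℝ) (x u : ℝ) :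
    mehler h g (x + σ * u) = ∫ z, stepDensity n u z *
      Real.exp (-(Real.tanh h / 2 * ((x + σ * u) ^ 2 + (x + σ * z) ^ 2))) * g (x + σ * z) := by
  have hn' : (0 : ℝ) < n := by positivity
  have hS : 0 < Real.sinh (2 * h) := Real.sinh_pos_iff.2 (by positivity)
  unfold mehler
  set F : ℝ → ℝ := fun z => (√(2 * π * Real.sinh (2 * h)))⁻¹ *
    Real.exp (-(1 / 2) * (((x + σ * u) ^ 2 + z ^ 2) * Real.cosh (2 * h) / Real.sinh (2 * h)
      - 2 * (x + σ * u) * z / Real.sinh (2 * h))) * g z with hF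
  have h1 : ∫ z, F z = σ * ∫ z, F (x + σ * z) := by
    rw [Measure.integral_comp_mul_left (fun y => F (x + y)), integral_add_left_eq_self F x,
      abs_of_pos (inv_pos.2 hσ), smul_eq_mul, mul_inv_cancel_left₀ hσ.ne']
  rw [h1, ← integral_const_mul]
  refine integral_congr_ae (Eventually.of_forall fun z => ?_)
  have hpre : σ * (√(2 * π * Real.sinh (2 * h)))⁻¹ = (√(2 * π * (n : ℝ)⁻¹))⁻¹ := by
    have : 2 * π * Real.sinh (2 * h) = σ ^ 2 * (2 * π * (n : ℝ)⁻¹) := by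
      rw [hσ2]; field_simp
    rw [this, Real.sqrt_mul (by positivity), Real.sqrt_sq hσ.le, mul_inv,
      mul_inv_cancel_left₀ hσ.ne']
  have htanh : Real.tanh h = (Real.cosh (2 * h) - 1) / Real.sinh (2 * h) := by
    have hc := Real.cosh_pos h
    have hs := Real.sinh_pos_iff.2 hh
    rw [Real.tanh_eq_sinh_div_cosh, Real.cosh_two_mul, Real.cosh_sq, Real.sinh_two_mul]
    field_simp
    ring
  simp only [hF, stepDensity]
  rw [← mul_assoc, ← mul_assoc, hpre, mul_assoc _ (Real.exp _) (Real.exp _), ← Real.exp_add]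
  congr 3
  have hsub : Real.sinh (2 * h) = σ ^ 2 / n := by rw [hσ2]; field_simp
  rw [htanh, hsub]
  field_simp
  ring

/-- The one-step weight of the splitting scheme with `n` steps, in the coordinates
`y = x + σ u`: the potential `c` evaluated after `k` steps and the trapezoidal weight coming from
the Mehler kernel. -/
def stepWeight (c : ℝ → ℝ → ℝ) (t x σ : ℝ) (n k : ℕ) (u z : ℝ) : ℝ :=
  Real.exp (-(t / n * c (k * t / n) (x + σ * u))) *
    Real.exp (-(Real.tanh (t / n) / 2 * ((x + σ * u) ^ 2 + (x + σ * z) ^ 2)))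

lemma atNode_two_mul_succ {n : ℕ} (hn : 0 < n) {t σ : ℝ} (ht : 0 < t) (hσ : 0 < σ)
    (hσ2 : σ ^ 2 = n * Real.sinh (2 * (t / n))) (v₀ : ℝ → ℝ) (c : ℝ → ℝ → ℝ) (x : ℝ)
    (k : ℕ) (u : ℝ) :
    atNode v₀ c t n (2 * (k + 1)) (x + σ * u) = ∫ z, stepDensity n u z *
      stepWeight c t x σ n (k + 1) u z * atNode v₀ c t n (2 * k) (x + σ * z) := by
  have hn' : (0 : ℝ) < n := by positivity
  have e : atNode v₀ c t n (2 * (k + 1)) (x + σ * u) =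
      Real.exp (-(t / n * c (((k + 1 : ℕ) : ℝ) * t / n) (x + σ * u))) *
        mehler (t / n) (atNode v₀ c t n (2 * k)) (x + σ * u) := by
    have e1 : ((2 * k + 1 : ℕ) + 1 : ℝ) * t / (2 * n) = ((k + 1 : ℕ) : ℝ) * t / n := by
      push_cast; field_simp; ring
    rw [show 2 * (k + 1) = 2 * k + 1 + 1 by ring, atNode, if_neg (by omega), e1, atNode,
      if_pos (by omega), neg_mul]
  rw [e, mehler_rescaled hn (by positivity) hσ hσ2, ← integral_const_mul]
  refine integral_congr_ae (Eventually.of_forall fun z => ?_)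
  simp only [stepWeight]
  ring

lemma vApprox_eq_atNode {n : ℕ} (hn : 0 < n) {t : ℝ} (ht : 0 < t) (v₀ : ℝ → ℝ)
    (c : ℝ → ℝ → ℝ) (x : ℝ) : vApprox v₀ c t n t x = atNode v₀ c t n (2 * n) x := by
  have hn' : (0 : ℝ) < n := by positivity
  obtain ⟨m, rfl⟩ : ∃ m, n = m + 1 := ⟨n - 1, by omega⟩
  have hfloor : ⌊2 * ((m + 1 : ℕ) : ℝ) * t / t⌋₊ = 2 * (m + 1) := by
    rw [mul_div_cancel_right₀ _ ht.ne']
    exact_mod_cast Nat.floor_natCast (R := ℝ) (2 * (m + 1))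
  have hk : min ⌊2 * ((m + 1 : ℕ) : ℝ) * t / t⌋₊ (2 * (m + 1) - 1) = 2 * m + 1 := by
    rw [hfloor]; omega
  unfold vApprox
  simp only [hk]
  rw [if_neg (by omega), show 2 * (m + 1) = 2 * m + 1 + 1 by ring, atNode.eq_2 _ _ _ _ (2 * m + 1),
    if_neg (by omega)]
  congr 2
  push_cast
  field_simp
  ring

/-- The node values of the scheme depend on `c` only at nonnegative times. -/
lemma atNode_congr {t : ℝ} (ht : 0 ≤ t) (v₀ : ℝ → ℝ) {c c' : ℝ → ℝ → ℝ}
    (h : ∀ s, 0 ≤ s → c s = c' s) (n k : ℕ) : atNode v₀ c t n k = atNode v₀ c' t n k := by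
  induction k with
  | zero => rfl
  | succ k ih => rw [atNode, atNode, ih, h _ (by positivity)]

/-! ### Evaluation maps on the Wiener space -/

instance : BorelSpace CW := ⟨rfl⟩

lemma CW.continuous_eval (w : CW) : Continuous w.eval :=
  w.1.continuous.comp continuous_projIcc

lemma CW.measurable_eval (s : ℝ) : Measurable fun w : CW => w.eval s := by
  have h : Continuous fun w : CW => w.eval s :=
    (continuous_eval_const (F := C(Set.Icc (0:ℝ) 1, ℝ))
      (Set.projIcc (0:ℝ) 1 zero_le_one s)).comp continuous_subtype_val
  exact h.measurable

lemma CW.eval_zero (w : CW) : w.eval 0 = 0 := by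
  have := w.2
  simpa [CW.eval, Set.projIcc_left] using this

/-! ### Riemann sums and elementary limits -/

/-- Riemann sums with an auxiliary parameter tending to a limit and with two interlaced sample
points per cell. -/
lemma tendsto_riemann_sum {P : Type*} [PseudoMetricSpace P] [ProperSpace P]
    {H : P × ℝ × ℝ → ℝ} (hH : Continuous H) {p : ℕ → P} {p₀ : P}
    (hp : Tendsto p atTop (𝓝 p₀)) :
    Tendsto (fun n : ℕ => ∑ i ∈ Finset.range n,
        (n : ℝ)⁻¹ * H (p n, (i : ℝ) / n, ((i + 1 : ℕ) : ℝ) / n)) atTop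
      (𝓝 (∫ s in (0:ℝ)..1, H (p₀, s, s))) := by
  rw [Metric.tendsto_nhds]
  intro ε hε
  have hK : IsCompact (Metric.closedBall p₀ 1 ×ˢ Set.Icc (0:ℝ) 1 ×ˢ Set.Icc (0:ℝ) 1) :=
    (isCompact_closedBall p₀ 1).prod (isCompact_Icc.prod isCompact_Icc)
  obtain ⟨δ, hδ, hU⟩ := Metric.uniformContinuousOn_iff.1
    (hK.uniformContinuousOn_of_continuous hH.continuousOn) (ε / 2) (by positivity)
  have hlim : Tendsto (fun n : ℕ => (n : ℝ)⁻¹) atTop (𝓝 0) := tendsto_inv_atTop_nhds_zero_nat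
  filter_upwards [Metric.tendsto_nhds.1 hp (min δ 1) (by positivity),
    hlim.eventually_lt_const hδ, eventually_gt_atTop 0] with n hpn hnδ hn
  have hn' : (0 : ℝ) < n := by exact_mod_cast hn
  have hfc : Continuous fun s : ℝ => H (p₀, s, s) := by fun_prop
  have hsplit : ∫ s in (0:ℝ)..1, H (p₀, s, s) =
      ∑ i ∈ Finset.range n, ∫ s in ((i : ℝ) / n)..(((i + 1 : ℕ) : ℝ) / n), H (p₀, s, s) := by
    rw [intervalIntegral.sum_integral_adjacent_intervals (a := fun i : ℕ => (i : ℝ) / n)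
      fun k _ => hfc.intervalIntegrable _ _]
    simp [hn'.ne']
  have hlen : ∀ i : ℕ, ((i + 1 : ℕ) : ℝ) / n - (i : ℝ) / n = (n : ℝ)⁻¹ := by
    intro i; push_cast; field_simp; ring
  have hcell : ∀ i ∈ Finset.range n, ‖(n : ℝ)⁻¹ * H (p n, (i : ℝ) / n, ((i + 1 : ℕ) : ℝ) / n) -
      ∫ s in ((i : ℝ) / n)..(((i + 1 : ℕ) : ℝ) / n), H (p₀, s, s)‖ ≤ ε / 2 * (n : ℝ)⁻¹ := by
    intro i hi
    have hi' : ((i + 1 : ℕ) : ℝ) ≤ n := by exact_mod_cast Finset.mem_range.1 hi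
    have h0 : 0 ≤ (i : ℝ) / n := by positivity
    have h1 : ((i + 1 : ℕ) : ℝ) / n ≤ 1 := (div_le_one hn').2 hi'
    have h01 := hlen i
    have hpos : 0 < (n : ℝ)⁻¹ := inv_pos.2 hn'
    have hconst : (n : ℝ)⁻¹ * H (p n, (i : ℝ) / n, ((i + 1 : ℕ) : ℝ) / n) =
        ∫ _ in ((i : ℝ) / n)..(((i + 1 : ℕ) : ℝ) / n),
          H (p n, (i : ℝ) / n, ((i + 1 : ℕ) : ℝ) / n) := by
      rw [intervalIntegral.integral_const, h01, smul_eq_mul]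
    rw [hconst, ← intervalIntegral.integral_sub (by simp) (hfc.intervalIntegrable _ _)]
    refine (intervalIntegral.norm_integral_le_of_norm_le_const (C := ε / 2) fun s hs => ?_).trans
      (by rw [h01, abs_of_pos hpos])
    rw [Set.uIoc_of_le (by linarith)] at hs
    obtain ⟨hs1, hs2⟩ := hs
    rw [← dist_eq_norm]
    refine (hU _ ⟨?_, ⟨h0, by linarith⟩, by linarith, h1⟩ _
      ⟨Metric.mem_closedBall_self zero_le_one, ⟨by linarith, by linarith⟩,
        by linarith, by linarith⟩ ?_).le
    · exact (hpn.trans_le (min_le_right _ _)).le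
    · rw [Prod.dist_eq, Prod.dist_eq, max_lt_iff, max_lt_iff, Real.dist_eq, Real.dist_eq,
        abs_lt, abs_lt]
      refine ⟨hpn.trans_le (min_le_left _ _), ⟨?_, ?_⟩, ?_, ?_⟩ <;> linarith
  rw [hsplit, dist_eq_norm, ← Finset.sum_sub_distrib]
  calc _ ≤ ∑ i ∈ Finset.range n, ε / 2 * (n : ℝ)⁻¹ := norm_sum_le_of_le _ hcell
    _ = ε / 2 := by simp; field_simp
    _ < ε := by linarith

/-- `n f(a / n) → f'(0) a` whenever `f 0 = 0`. -/
lemma tendsto_nat_mul_of_hasDerivAt {f : ℝ → ℝ} {d : ℝ} (hf : HasDerivAt f d 0) (h0 : f 0 = 0)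
    {a : ℝ} (ha : 0 < a) : Tendsto (fun n : ℕ => n * f (a / n)) atTop (𝓝 (a * d)) := by
  have h1 : Tendsto (fun n : ℕ => a / (n : ℝ)) atTop (𝓝[≠] 0) := by
    refine tendsto_nhdsWithin_iff.2 ⟨tendsto_const_div_atTop_nhds_zero_nat a, ?_⟩
    filter_upwards [eventually_gt_atTop 0] with n hn
    have : (0 : ℝ) < n := by exact_mod_cast hn
    exact (div_pos ha this).ne'
  have h2 := ((hasDerivAt_iff_tendsto_slope_zero.1 hf).comp h1).const_mul a
  refine h2.congr' ?_
  filter_upwards [eventually_gt_atTop 0] with n hn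
  have : (0 : ℝ) < n := by exact_mod_cast hn
  simp [h0]
  field_simp

lemma tendsto_nat_mul_sinh {a : ℝ} (ha : 0 < a) :
    Tendsto (fun n : ℕ => n * Real.sinh (a / n)) atTop (𝓝 a) := by
  simpa using tendsto_nat_mul_of_hasDerivAt (Real.hasDerivAt_sinh 0) Real.sinh_zero ha

lemma tendsto_nat_mul_tanh {a : ℝ} (ha : 0 < a) :
    Tendsto (fun n : ℕ => n * Real.tanh (a / n)) atTop (𝓝 a) := by
  have h1 : Tendsto (fun n : ℕ => Real.cosh (a / n)) atTop (𝓝 1) := by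
    rw [← Real.cosh_zero]
    exact (Real.continuous_cosh.tendsto 0).comp (tendsto_const_div_atTop_nhds_zero_nat a)
  have h2 := (tendsto_nat_mul_sinh ha).div h1 one_ne_zero
  rw [div_one] at h2
  refine h2.congr fun n => ?_
  simp [Real.tanh_eq_sinh_div_cosh, mul_div_assoc]

/-! ### The scheme as a Wiener integral and its limit -/

lemma abs_stepWeight_le {c : ℝ → ℝ → ℝ} {m : ℝ} (hm : ∀ s y, m ≤ c s y) {t : ℝ} (ht : 0 < t)
    (x σ : ℝ) (n k : ℕ) (u z : ℝ) :
    |stepWeight c t x σ n k u z| ≤ Real.exp (-(t / n * m)) := by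
  have hth : 0 ≤ Real.tanh (t / n) := by
    rw [Real.tanh_eq_sinh_div_cosh]
    exact div_nonneg (Real.sinh_nonneg_iff.2 (by positivity)) (Real.cosh_pos _).le
  rw [stepWeight, abs_of_nonneg (by positivity), ← mul_one (Real.exp (-(t / n * m)))]
  gcongr
  · exact hm _ _
  · exact Real.exp_le_one_iff.2 (by simp only [neg_nonpos]; positivity)

lemma measurable_stepWeight {c : ℝ → ℝ → ℝ} (hc : Continuous fun p : ℝ × ℝ => c p.1 p.2)
    (t x σ : ℝ) (n k : ℕ) :
    Measurable fun p : ℝ × ℝ => stepWeight c t x σ n k p.1 p.2 := by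
  have h1 : Continuous fun p : ℝ × ℝ => c (k * t / n) (x + σ * p.1) :=
    hc.comp (f := fun p : ℝ × ℝ => ((k * t / n : ℝ), x + σ * p.1)) (by fun_prop)
  unfold stepWeight
  exact Continuous.measurable (by fun_prop)

/-- The `n`-th approximation is exactly a Wiener integral: the scheme runs along a Brownian path
with diffusivity `σ² = n sinh (2t/n)` in place of `2t`, and with Riemann sums in place of the time
integrals. -/
lemma atNode_eq_integral {μ : Measure CW} (hμ : IsWienerMeasure μ) {v₀ : ℝ → ℝ}
    (hv₀c : Continuous v₀) {M : ℝ} (hM : ∀ y, |v₀ y| ≤ M) {c : ℝ → ℝ → ℝ}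
    (hc : Continuous fun p : ℝ × ℝ => c p.1 p.2) {m : ℝ} (hm : ∀ s y, m ≤ c s y)
    {t : ℝ} (ht : 0 < t) (x : ℝ) {n : ℕ} (hn : 0 < n) {σ : ℝ} (hσ : 0 < σ)
    (hσ2 : σ ^ 2 = n * Real.sinh (2 * (t / n))) :
    atNode v₀ c t n (2 * n) x = ∫ w : CW, chain (stepWeight c t x σ n)
      (fun u => v₀ (x + σ * u)) n 0 (fun i : Fin n => w.eval (((i : ℕ) + 1 : ℝ) / n)) ∂μ := by
  have hn' : (0 : ℝ) < n := by exact_mod_cast hn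
  have hfm : Measurable fun u => v₀ (x + σ * u) := by fun_prop
  have hWm := measurable_stepWeight hc t x σ n
  have key := iterate_eq_integral_chain (measurable_stepDensity n) (stepDensity_nonneg n)
    (lintegral_stepDensity hn) hWm (fun k u z => abs_stepWeight_le hm ht x σ n k u z) hfm
    (fun u => hM _) (J := fun k u => atNode v₀ c t n (2 * k) (x + σ * u)) rfl
    (fun k u => atNode_two_mul_succ hn ht hσ hσ2 v₀ c x k u) n 0
  simp only [mul_zero, add_zero] at key
  have hfdd := hμ.fdd n (fun i : Fin n => ((i : ℕ) + 1 : ℝ) / n)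
    (fun i j hij => by
      have : ((i : ℕ) : ℝ) < (j : ℕ) := by exact_mod_cast hij
      exact div_lt_div_of_pos_right (by linarith) hn')
    (fun i => by positivity)
    (fun i => by
      rw [div_le_one hn']
      exact_mod_cast i.2)
  have hD := measurable_chain_right (q := fun _ => stepDensity n) (f := 1)
    (fun _ => measurable_stepDensity n) measurable_one n 0
  have hF := measurable_chain_right hWm hfm n 0
  have hev : Measurable fun (w : CW) (i : Fin n) => w.eval (((i : ℕ) + 1 : ℝ) / n) :=
    measurable_pi_lambda _ fun i => CW.measurable_eval _
  rw [← integral_map (φ := fun (w : CW) (i : Fin n) => w.eval (((i : ℕ) + 1 : ℝ) / n))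
    hev.aemeasurable hF.aestronglyMeasurable, hfdd, key]
  simp_rw [normalDensity_eq_chain hn]
  rw [integral_withDensity_eq_integral_toReal_smul hD.ennreal_ofReal (by simp)]
  refine integral_congr_ae (Eventually.of_forall fun ξ => ?_)
  simp only [smul_eq_mul]
  rw [ENNReal.toReal_ofReal (chain_nonneg (f := 1) (fun _ => stepDensity_nonneg n)
    (fun _ => zero_le_one) n 0 ξ)]

/-- Convergence of the path weights of the scheme along a fixed Brownian path. -/
lemma tendsto_chain_path {v₀ : ℝ → ℝ} (hv₀c : Continuous v₀) {c : ℝ → ℝ → ℝ}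
    (hc : Continuous fun p : ℝ × ℝ => c p.1 p.2) {t : ℝ} (ht : 0 < t) (x : ℝ) (w : CW)
    {σ : ℕ → ℝ} {σ₀ : ℝ} (hσ : Tendsto σ atTop (𝓝 σ₀)) :
    Tendsto (fun n : ℕ => chain (stepWeight c t x (σ n) n)
        (fun u => v₀ (x + σ n * u)) n 0 (fun i : Fin n => w.eval (((i : ℕ) + 1 : ℝ) / n))) atTop
      (𝓝 (v₀ (σ₀ * w.eval 1 + x) *
        Real.exp (-(t * ∫ s in (0:ℝ)..1, (x + σ₀ * w.eval s) ^ 2)) *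
        Real.exp (-(t * ∫ s in (0:ℝ)..1, c (t * (1 - s)) (σ₀ * w.eval s + x))))) := by
  have hw := w.continuous_eval
  let H : (ℝ × ℝ) × ℝ × ℝ → ℝ := fun p =>
    t * c (t * (1 - p.2.1)) (x + p.1.2 * w.eval p.2.1) +
      p.1.1 / 2 * ((x + p.1.2 * w.eval p.2.1) ^ 2 + (x + p.1.2 * w.eval p.2.2) ^ 2)
  have hc2 : ∀ {X : Type} [TopologicalSpace X] {f g : X → ℝ}, Continuous f → Continuous g →
      Continuous fun p => c (f p) (g p) := fun hf hg => hc.comp (hf.prodMk hg)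
  have hcH : Continuous fun p : (ℝ × ℝ) × ℝ × ℝ =>
      c (t * (1 - p.2.1)) (x + p.1.2 * w.eval p.2.1) := hc2 (by fun_prop) (by fun_prop)
  have hH : Continuous H := by
    simp only [H]
    fun_prop
  have hR := tendsto_riemann_sum hH ((tendsto_nat_mul_tanh ht).prodMk_nhds hσ)
  have hlim : ∫ s in (0:ℝ)..1, H ((t, σ₀), s, s) =
      t * (∫ s in (0:ℝ)..1, (x + σ₀ * w.eval s) ^ 2) +
      t * ∫ s in (0:ℝ)..1, c (t * (1 - s)) (σ₀ * w.eval s + x) := by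
    have hcs : Continuous fun s : ℝ => c (t * (1 - s)) (σ₀ * w.eval s + x) :=
      hc2 (by fun_prop) (by fun_prop)
    rw [← intervalIntegral.integral_const_mul, ← intervalIntegral.integral_const_mul,
      ← intervalIntegral.integral_add (Continuous.intervalIntegrable (by fun_prop) _ _)
        (Continuous.intervalIntegrable (by fun_prop) _ _)]
    refine intervalIntegral.integral_congr fun s _ => ?_
    simp only [H]
    rw [add_comm (σ₀ * w.eval s) x]
    ring
  have hE := (Real.continuous_exp.tendsto _).comp hR.neg
  have hv : Tendsto (fun n : ℕ => v₀ (x + σ n * w.eval 1)) atTop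
      (𝓝 (v₀ (x + σ₀ * w.eval 1))) :=
    (hv₀c.tendsto _).comp ((hσ.mul_const _).const_add x)
  have hprod := hE.mul hv
  rw [hlim] at hprod
  have hval : Real.exp (-(t * (∫ s in (0:ℝ)..1, (x + σ₀ * w.eval s) ^ 2) +
      t * ∫ s in (0:ℝ)..1, c (t * (1 - s)) (σ₀ * w.eval s + x))) * v₀ (x + σ₀ * w.eval 1) =
      v₀ (σ₀ * w.eval 1 + x) *
        Real.exp (-(t * ∫ s in (0:ℝ)..1, (x + σ₀ * w.eval s) ^ 2)) *
        Real.exp (-(t * ∫ s in (0:ℝ)..1, c (t * (1 - s)) (σ₀ * w.eval s + x))) := by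
    rw [neg_add, Real.exp_add, add_comm (σ₀ * w.eval 1) x]
    ring
  rw [hval] at hprod
  refine hprod.congr' ?_
  filter_upwards [eventually_gt_atTop 0] with n hn
  have hn' : (0 : ℝ) < n := by exact_mod_cast hn
  have hp := chain_path (stepWeight c t x (σ n) n) (fun u => v₀ (x + σ n * u)) n
    (fun i : ℕ => w.eval ((i : ℝ) / n))
  simp only [Nat.cast_zero, zero_div, w.eval_zero, Nat.cast_add, Nat.cast_one,
    div_self hn'.ne'] at hp
  rw [hp]
  congr 1
  rw [Function.comp_apply, ← Finset.sum_neg_distrib, Real.exp_sum]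
  refine Finset.prod_congr rfl fun i hi => ?_
  have hi' : i ≤ n := (Finset.mem_range.1 hi).le
  have hτ : ((n - i : ℕ) : ℝ) * t / n = t * (1 - (i : ℝ) / n) := by
    rw [Nat.cast_sub hi']; field_simp
  rw [stepWeight, hτ, ← Real.exp_add]
  congr 1
  simp only [H]
  push_cast
  field_simp
  ring

/-- The convergence for a potential that is continuous and bounded below on all of `ℝ × ℝ`. -/
lemma tendsto_atNode_wienerFK {μ : Measure CW} (hμ : IsWienerMeasure μ) {v₀ : ℝ → ℝ}
    (hv₀c : Continuous v₀) {M : ℝ} (hM : ∀ y, |v₀ y| ≤ M) {c : ℝ → ℝ → ℝ}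
    (hc : Continuous fun p : ℝ × ℝ => c p.1 p.2) {m : ℝ} (hm : ∀ s y, m ≤ c s y)
    {t : ℝ} (ht : 0 < t) (x : ℝ) :
    Tendsto (fun n : ℕ => atNode v₀ c t n (2 * n) x) atTop (𝓝 (wienerFK μ v₀ c t x)) := by
  have := hμ.prob
  let σ : ℕ → ℝ := fun n => √(n * Real.sinh (2 * (t / n)))
  have hσ : Tendsto σ atTop (𝓝 √(2 * t)) := by
    refine (Real.continuous_sqrt.tendsto _).comp ?_
    refine (tendsto_nat_mul_sinh (a := 2 * t) (by positivity)).congr fun n => ?_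
    rw [mul_div_assoc]
  have hfm : ∀ n, Measurable fun u => v₀ (x + σ n * u) := fun n => by fun_prop
  have hdom : Tendsto (fun n : ℕ => ∫ w : CW, chain (stepWeight c t x (σ n) n)
      (fun u => v₀ (x + σ n * u)) n 0 (fun i : Fin n => w.eval (((i : ℕ) + 1 : ℝ) / n)) ∂μ)
      atTop (𝓝 (wienerFK μ v₀ c t x)) := by
    refine tendsto_integral_filter_of_dominated_convergence
      (fun _ => Real.exp (-(t * m)) * M) ?_ ?_ (integrable_const _)
      (Eventually.of_forall fun w => tendsto_chain_path hv₀c hc ht x w hσ)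
    · refine Eventually.of_forall fun n => Measurable.aestronglyMeasurable ?_
      exact (measurable_chain_right (measurable_stepWeight hc t x (σ n) n) (hfm n) n 0).comp
        (measurable_pi_lambda _ fun i => CW.measurable_eval _)
    · filter_upwards [eventually_gt_atTop 0] with n hn
      have hn' : (0 : ℝ) < n := by exact_mod_cast hn
      refine Eventually.of_forall fun w => ?_
      refine (abs_chain_le (fun k u z => abs_stepWeight_le hm ht x (σ n) n k u z)
        (fun u => hM _) n 0 _).trans_eq ?_
      rw [← Real.exp_nat_mul]
      congr 2
      field_simp
  refine hdom.congr' ?_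
  filter_upwards [eventually_gt_atTop 0] with n hn
  have hn' : (0 : ℝ) < n := by exact_mod_cast hn
  have hpos : 0 < n * Real.sinh (2 * (t / n)) :=
    mul_pos hn' (Real.sinh_pos_iff.2 (by positivity))
  exact (atNode_eq_integral hμ hv₀c hM hc hm ht x hn (Real.sqrt_pos.2 hpos)
    (Real.sq_sqrt hpos.le)).symm

/-- **Proposition (convergence of the approximation sequence).** Under regularity
assumptions on `v₀` and `c`, the sequence `v_n^{(t)}(t,x)` converges to the Feynman–Kac
type Wiener integral `v(t,x)`. -/
theorem vApprox_tendsto_wienerFK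
    (μ : Measure CW) (hμ : IsWienerMeasure μ)
    (v₀ : ℝ → ℝ) (hv₀c : Continuous v₀) (hv₀b : ∃ M : ℝ, ∀ x : ℝ, |v₀ x| ≤ M)
    (c : ℝ → ℝ → ℝ)
    (hc_cont : ContinuousOn (fun p : ℝ × ℝ => c p.1 p.2) (Set.Ici 0 ×ˢ Set.univ))
    (hc_low : ∃ m : ℝ, ∀ s ∈ Set.Ici (0:ℝ), ∀ x : ℝ, m ≤ c s x)
    (cx : ℝ → ℝ → ℝ)
    (hcx_deriv : ∀ s > (0:ℝ), ∀ x : ℝ, HasDerivAt (fun y => c s y) (cx s x) x)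
    (hcx_cont : ContinuousOn (fun p : ℝ × ℝ => cx p.1 p.2) (Set.Ici 0 ×ˢ Set.univ))
    (hcx_bdd : ∃ M : ℝ, ∀ s ∈ Set.Ici (0:ℝ), ∀ x : ℝ, |cx s x| ≤ M)
    (t : ℝ) (ht : 0 < t) (x : ℝ) :
    Tendsto (fun n : ℕ => vApprox v₀ c t n t x) atTop (𝓝 (wienerFK μ v₀ c t x)) := by
  obtain ⟨M, hM⟩ := hv₀b
  obtain ⟨m, hm⟩ := hc_low
  -- Extend `c` to negative times by its value at time `0`.
  let c' : ℝ → ℝ → ℝ := fun s y => c (max s 0) y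
  have hcc' : ∀ s, 0 ≤ s → c s = c' s := fun s hs => by simp [c', max_eq_left hs]
  have hc' : Continuous fun p : ℝ × ℝ => c' p.1 p.2 :=
    hc_cont.comp_continuous (f := fun p : ℝ × ℝ => (max p.1 0, p.2)) (by fun_prop)
      fun p => ⟨Set.mem_Ici.2 (le_max_right _ _), Set.mem_univ _⟩
  have hm' : ∀ s y, m ≤ c' s y := fun s y => hm _ (Set.mem_Ici.2 (le_max_right _ _)) y
  have hFK : wienerFK μ v₀ c t x = wienerFK μ v₀ c' t x := by
    unfold wienerFK
    refine integral_congr_ae (Eventually.of_forall fun w => ?_)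
    have : ∫ s in (0:ℝ)..1, c (t * (1 - s)) (√(2 * t) * w.eval s + x) =
        ∫ s in (0:ℝ)..1, c' (t * (1 - s)) (√(2 * t) * w.eval s + x) := by
      refine intervalIntegral.integral_congr fun s hs => ?_
      rw [Set.uIcc_of_le zero_le_one] at hs
      rw [hcc' _ (mul_nonneg ht.le (by linarith [hs.2]))]
    simp only [this]
  rw [hFK]
  refine (tendsto_atNode_wienerFK hμ hv₀c hM hc' hm' ht x).congr' ?_
  filter_upwards [eventually_gt_atTop 0] with n hn
  rw [vApprox_eq_atNode hn ht, atNode_congr ht.le v₀ hcc']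

end
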